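/- arXiv:1411.1191 — 2 statements merged into one kernel-verified Lean document; each statement's English description precedes it below -/
import Mathlib

section
/- Let g ≥ 2 be an integer and p an odd prime with p > 2(g-1). Then the real number (p^(g-1)/2^(2g-1)) · Σ_{θ=1}^{p-1} 1/sin^(2g-2)(πθ/p) is a positive integer. (By Corollary 5.4 it equals the degree of the moduli stack of dormant indigenous bundles over the moduli stack of genus-g curves in characteristic p.) -/
open Real

lemma aux_sumpoly (p : ℕ) (ζ : ℂ) (hζ : ζ ^ p = 1) (q : Polynomial ℤ) :
    ∃ n : ℤ, ∑ θ ∈ Finset.range p, Polynomial.aeval (ζ ^ θ) q = (n : ℂ) := by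
  induction q using Polynomial.induction_on' with
  | add a b ha hb =>
    obtain ⟨m, hm⟩ := ha
    obtain ⟨n, hn⟩ := hb
    refine ⟨m + n, ?_⟩
    simp only [map_add, Finset.sum_add_distrib, hm, hn]
    push_cast
    rfl
  | monomial k a =>
    have h1 : ∀ θ ∈ Finset.range p,
        Polynomial.aeval (ζ ^ θ) (Polynomial.monomial k a) = (a : ℂ) * (ζ ^ k) ^ θ := by
      intro θ _
      rw [Polynomial.aeval_monomial]
      simp only [algebraMap_int_eq, eq_intCast, ← pow_mul]
      rw [mul_comm θ k]
    rw [Finset.sum_congr rfl h1, ← Finset.mul_sum]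
    by_cases h : ζ ^ k = 1
    · refine ⟨a * p, ?_⟩
      simp [h]
    · refine ⟨0, ?_⟩
      rw [geom_sum_eq h, ← pow_mul, mul_comm k p, pow_mul, hζ]
      simp

lemma aux_S (p : ℕ) (z : ℂ) (n : ℕ) :
    (1 - z) * ∑ k ∈ Finset.range n, (k : ℂ) * z ^ k
      = (∑ k ∈ Finset.range n, z ^ k) - 1 - (n - 1) * z ^ n := by
  induction n with
  | zero => simp
  | succ n ih =>
    rw [Finset.sum_range_succ, Finset.sum_range_succ, mul_add, ih]
    push_cast
    ring

lemma aux_sin (x : ℝ) :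
    ((4 * Real.sin x ^ 2 : ℝ) : ℂ)
      = (1 - Complex.exp (2 * x * Complex.I)) * (1 - Complex.exp (-(2 * x * Complex.I))) := by
  have h1 : Complex.exp (2 * x * Complex.I) = Complex.exp (x * Complex.I) ^ 2 := by
    rw [← Complex.exp_nat_mul]; congr 1; push_cast; ring
  have h2 : Complex.exp (-(2 * x * Complex.I)) = Complex.exp (-x * Complex.I) ^ 2 := by
    rw [← Complex.exp_nat_mul]; congr 1; push_cast; ring
  have h3 : Complex.exp (x * Complex.I) * Complex.exp (-x * Complex.I) = 1 := by
    rw [← Complex.exp_add]; simp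
  push_cast
  rw [Complex.sin, h1, h2]
  set a := Complex.exp (x * Complex.I)
  set b := Complex.exp (-x * Complex.I)
  have : (4:ℂ) * ((b - a) * Complex.I / 2) ^ 2 = - (b - a) ^ 2 := by
    have := Complex.I_sq
    linear_combination (b-a)^2 * this
  rw [this]
  linear_combination (1 - a * b) * h3

/-- integrality -/
lemma aux_int (p : ℕ) (hp : p.Prime) (hodd : Odd p) (z : ℂ) (hz : IsPrimitiveRoot z p) :
    IsIntegral ℤ ((p : ℂ) / ((1 - z) * (1 - z⁻¹))) := by
  have hp3 : 3 ≤ p := by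
    have := hp.two_le
    rcases hodd with ⟨k, hk⟩
    omega
  haveI := Fact.mk hp
  have hz0 : IsIntegral ℤ z := hz.isIntegral hp.pos
  have hprod : ∏ μ ∈ primitiveRoots p ℂ, (1 - μ) = (p : ℂ) := by
    have h := Polynomial.eval_one_cyclotomic_prime (R := ℂ) (p := p)
    rw [Polynomial.cyclotomic_eq_prod_X_sub_primitiveRoots hz, Polynomial.eval_prod] at h
    simpa using h
  have hm1 : z ∈ primitiveRoots p ℂ := (mem_primitiveRoots hp.pos).2 hz
  have hne : z⁻¹ ≠ z := by
    intro h
    have h0 : z ≠ 0 := hz.ne_zero hp.ne_zero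
    have : z ^ 2 = 1 := by
      field_simp at h
      exact h.symm
    have := Nat.le_of_dvd (by norm_num) (hz.dvd_of_pow_eq_one 2 this)
    omega
  have hm2 : z⁻¹ ∈ (primitiveRoots p ℂ).erase z :=
    Finset.mem_erase.2 ⟨hne, (mem_primitiveRoots hp.pos).2 hz.inv⟩
  rw [← Finset.mul_prod_erase _ _ hm1, ← Finset.mul_prod_erase _ _ hm2] at hprod
  have h1 : 1 - z ≠ 0 := sub_ne_zero.2 (hz.ne_one hp.one_lt).symm
  have h2 : 1 - z⁻¹ ≠ 0 := sub_ne_zero.2 (hz.inv.ne_one hp.one_lt).symm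
  rw [← hprod, ← mul_assoc, mul_div_cancel_left₀ _ (mul_ne_zero h1 h2)]
  apply IsIntegral.prod
  intro μ hμ
  have := (mem_primitiveRoots hp.pos).1 (Finset.mem_of_mem_erase (Finset.mem_of_mem_erase hμ))
  exact isIntegral_one.sub (this.isIntegral hp.pos)

lemma aux_F (p : ℕ) (hp : p.Prime) (z : ℂ) (hz : IsPrimitiveRoot z p) :
    (p : ℂ) / ((1 - z) * (1 - z⁻¹)) =
      - z * (∑ k ∈ Finset.range p, (k : ℂ) * z ^ k) ^ 2 / p := by
  have h := aux_S p z p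
  rw [hz.geom_sum_eq_zero hp.one_lt, hz.pow_eq_one] at h
  have h0 : z ≠ 0 := hz.ne_zero hp.ne_zero
  have h1 : 1 - z ≠ 0 := sub_ne_zero.2 (hz.ne_one hp.one_lt).symm
  have h2 : 1 - z⁻¹ ≠ 0 := sub_ne_zero.2 (hz.inv.ne_one hp.one_lt).symm
  have hp0 : (p : ℂ) ≠ 0 := by exact_mod_cast hp.ne_zero
  set S := ∑ k ∈ Finset.range p, (k : ℂ) * z ^ k
  have h3 : z * (1 - z⁻¹) = - (1 - z) := by field_simp; ring
  rw [div_eq_div_iff (mul_ne_zero h1 h2) hp0]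
  have h4 : (1 - z) * S = -p := by rw [h]; ring
  calc (p:ℂ) * p = ((1 - z) * S) ^ 2 := by rw [h4]; ring
    _ = -(z * (1 - z⁻¹)) * S ^ 2 * (1 - z) := by rw [h3]; ring
    _ = _ := by ring

theorem stmt_6 (p g : ℕ) (hp : p.Prime) (hodd : Odd p) (hg : 2 ≤ g)
    (hpg : 2 * (g - 1) < p) :
    ∃ n : ℕ, 0 < n ∧
      ((p : ℝ) ^ (g - 1) / 2 ^ (2 * g - 1)) *
        ∑ θ ∈ Finset.Icc 1 (p - 1), 1 / Real.sin (π * θ / p) ^ (2 * g - 2) = n := by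
  obtain ⟨m, rfl⟩ : ∃ m, g = m + 1 := ⟨g - 1, by omega⟩
  obtain ⟨h, hh⟩ := hodd
  have hp0 : (p : ℝ) ≠ 0 := by exact_mod_cast hp.ne_zero
  have hpc : (p : ℂ) ≠ 0 := by exact_mod_cast hp.ne_zero
  have hppos : (0 : ℝ) < p := by exact_mod_cast hp.pos
  have hp2 := hp.two_le
  set X : ℕ → ℝ := fun θ => p / (4 * Real.sin (π * θ / p) ^ 2) with hX
  set ζ : ℂ := Complex.exp (2 * π * Complex.I / p) with hζd
  have hζ : IsPrimitiveRoot ζ p := Complex.isPrimitiveRoot_exp p hp.ne_zero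
  have hprim : ∀ θ ∈ Finset.Icc 1 (p - 1), IsPrimitiveRoot (ζ ^ θ) p := by
    intro θ hθ
    rw [Finset.mem_Icc] at hθ
    apply hζ.pow_of_coprime
    exact ((hp.coprime_iff_not_dvd).2 fun hd => by have := Nat.le_of_dvd (by omega) hd; omega).symm
  have hXz : ∀ θ, ((X θ : ℝ) : ℂ) = (p : ℂ) / ((1 - ζ ^ θ) * (1 - (ζ ^ θ)⁻¹)) := by
    intro θ
    have hz : ζ ^ θ = Complex.exp (2 * (π * θ / p : ℝ) * Complex.I) := by
      rw [hζd, ← Complex.exp_nat_mul]; congr 1; push_cast; ring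
    rw [hz, ← Complex.exp_neg, ← aux_sin]
    simp only [hX]
    push_cast
    rfl
  have hXpos : ∀ θ ∈ Finset.Icc 1 (p - 1), 0 < X θ := by
    intro θ hθ
    rw [Finset.mem_Icc] at hθ
    have h1 : (0 : ℝ) < θ := by exact_mod_cast hθ.1
    have h2 : (θ : ℝ) < p := by exact_mod_cast (by omega : θ < p)
    have : 0 < Real.sin (π * θ / p) := by
      apply Real.sin_pos_of_pos_of_lt_pi
      · positivity
      · rw [div_lt_iff₀ hppos]
        exact mul_lt_mul_of_pos_left h2 Real.pi_pos
    simp only [hX]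
    positivity
  -- the full sum is rational
  have hrat : ∃ n : ℤ, ∑ θ ∈ Finset.Icc 1 (p - 1), ((X θ : ℝ) : ℂ) ^ m = (n : ℂ) / (p : ℂ) ^ m := by
    set q : Polynomial ℤ := (- Polynomial.X *
      (∑ k ∈ Finset.range p, (k : Polynomial ℤ) * Polynomial.X ^ k) ^ 2) ^ m with hq
    have hqe : ∀ z : ℂ, Polynomial.aeval z q
        = (- z * (∑ k ∈ Finset.range p, (k : ℂ) * z ^ k) ^ 2) ^ m := by
      intro z
      simp [hq, map_sum]
    obtain ⟨n, hn⟩ := aux_sumpoly p ζ hζ.pow_eq_one q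
    refine ⟨n - q.eval 1, ?_⟩
    have hr : Finset.range p = insert 0 (Finset.Icc 1 (p - 1)) := by
      ext a; simp only [Finset.mem_range, Finset.mem_insert, Finset.mem_Icc]; omega
    have h1 : ∀ θ ∈ Finset.Icc 1 (p - 1), ((X θ : ℝ) : ℂ) ^ m
        = Polynomial.aeval (ζ ^ θ) q / (p : ℂ) ^ m := by
      intro θ hθ
      rw [hXz, aux_F p hp _ (hprim θ hθ), hqe, div_pow]
    rw [Finset.sum_congr rfl h1, ← Finset.sum_div]
    congr 1
    rw [hr, Finset.sum_insert (by simp)] at hn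
    have h0 : Polynomial.aeval (ζ ^ 0) q = ((q.eval 1 : ℤ) : ℂ) := by
      rw [pow_zero]
      have := Polynomial.aeval_algebraMap_apply ℂ (1 : ℤ) q
      simpa using this
    rw [h0] at hn
    push_cast
    rw [← hn]
    ring
  -- the half sum
  have hsym : ∑ θ ∈ Finset.Icc 1 (p - 1), X θ ^ m = 2 * ∑ θ ∈ Finset.Icc 1 h, X θ ^ m := by
    have hu : Finset.Icc 1 (p - 1) = Finset.Icc 1 h ∪ Finset.Icc (h + 1) (p - 1) := by
      ext a; simp only [Finset.mem_union, Finset.mem_Icc]; omega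
    have hd : Disjoint (Finset.Icc 1 h) (Finset.Icc (h + 1) (p - 1)) := by
      rw [Finset.disjoint_left]; intro a; simp only [Finset.mem_Icc]; omega
    rw [hu, Finset.sum_union hd, two_mul]
    congr 1
    refine Finset.sum_nbij' (fun a => p - a) (fun a => p - a) ?_ ?_ ?_ ?_ ?_
    · intro a; simp only [Finset.mem_Icc]; omega
    · intro a; simp only [Finset.mem_Icc]; omega
    · intro a; simp only [Finset.mem_Icc]; omega
    · intro a; simp only [Finset.mem_Icc]; omega
    · intro a ha
      rw [Finset.mem_Icc] at ha
      simp only [hX]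
      rw [Nat.cast_sub (by omega)]
      have : π * ((p : ℝ) - a) / p = π - π * a / p := by field_simp
      rw [this, Real.sin_pi_sub]
  have hsub : Finset.Icc 1 h ⊆ Finset.Icc 1 (p - 1) := by
    intro a; simp only [Finset.mem_Icc]; omega
  have hpos : 0 < ∑ θ ∈ Finset.Icc 1 h, X θ ^ m := by
    apply Finset.sum_pos
    · intro θ hθ; exact pow_pos (hXpos θ (hsub hθ)) m
    · exact ⟨1, by rw [Finset.mem_Icc]; omega⟩
  have hint : IsIntegral ℤ (((∑ θ ∈ Finset.Icc 1 h, X θ ^ m : ℝ)) : ℂ) := by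
    push_cast
    apply IsIntegral.sum
    intro θ hθ
    apply IsIntegral.pow
    rw [hXz]
    exact aux_int p hp ⟨h, hh⟩ _ (hprim θ (hsub hθ))
  have hlhs : ((p : ℝ) ^ (m + 1 - 1) / 2 ^ (2 * (m + 1) - 1)) *
        ∑ θ ∈ Finset.Icc 1 (p - 1), 1 / Real.sin (π * θ / p) ^ (2 * (m + 1) - 2)
      = ∑ θ ∈ Finset.Icc 1 h, X θ ^ m := by
    have : ∑ θ ∈ Finset.Icc 1 h, X θ ^ m = (1 / 2) * ∑ θ ∈ Finset.Icc 1 (p - 1), X θ ^ m := by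
      rw [hsym]; ring
    rw [this, Finset.mul_sum, Finset.mul_sum]
    refine Finset.sum_congr rfl fun θ _ => ?_
    have e1 : 2 * (m + 1) - 1 = 2 * m + 1 := by omega
    have e2 : 2 * (m + 1) - 2 = 2 * m := by omega
    simp only [hX]
    rw [e1, e2, Nat.add_sub_cancel, div_pow, mul_pow, ← pow_mul, pow_succ, pow_mul 2 2 m]
    norm_num
    ring
  rw [hlhs]
  set N := ∑ θ ∈ Finset.Icc 1 h, X θ ^ m with hN
  obtain ⟨n, hn⟩ := hrat
  have hNr : ((N : ℝ) : ℂ) = algebraMap ℚ ℂ ((n : ℚ) / p ^ m / 2) := by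
    have h2 : ((2 * N : ℝ) : ℂ) = (n : ℂ) / (p : ℂ) ^ m := by
      rw [← hn, ← hsym]; push_cast; rfl
    push_cast at h2
    simp only [eq_ratCast]
    push_cast
    rw [← h2]; ring
  rw [hNr, isIntegral_algebraMap_iff (algebraMap ℚ ℂ).injective] at hint
  obtain ⟨k, hk⟩ := IsIntegrallyClosed.isIntegral_iff.1 hint
  have hNk : N = (k : ℝ) := by
    rw [← hk] at hNr
    have : ((N : ℝ) : ℂ) = ((k : ℝ) : ℂ) := by rw [hNr]; simp
    exact_mod_cast this
  have hkpos : 0 < k := by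
    rw [hNk] at hpos; exact_mod_cast hpos
  refine ⟨k.toNat, by omega, ?_⟩
  rw [hNk]
  have : ((k.toNat : ℤ) : ℝ) = (k : ℝ) := by rw [Int.toNat_of_nonneg hkpos.le]
  rw [← this]; exact Int.cast_natCast _
end

section
/- Let p be an odd prime with p > 18. Then (p^9/2^19) · Σ_{θ=1}^{p-1} 1/sin^18(πθ/p) = (1/524288) · p^9 · ((87734/38979295480125)p^18 + (3617/54273594375)p^16 + (92/91216125)p^14 + (2092348/201131555625)p^12 + (4042/49116375)p^10 + (18716/35083125)p^8 + (119654944/40226311125)p^6 + (16229632/1064188125)p^4 + (32768/328185)p^2 - 23133945892303/194896477400625). (This is the genus-10 case of the degree formula of Corollary 5.4.) -/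
open Real

open Polynomial in
lemma aux_rec (p : ℕ) (k : ℕ) :
    (Chebyshev.T ℝ p).coeff (k + 2) * ((k + 2) * (k + 1)) =
      -((p : ℝ) ^ 2 - k ^ 2) * (Chebyshev.T ℝ p).coeff k := by
  have h := Chebyshev.iterate_derivative_T_eval_zero_recurrence (R := ℝ) p k
  rw [← coeff_zero_eq_eval_zero, ← coeff_zero_eq_eval_zero, coeff_iterate_derivative,
    coeff_iterate_derivative, zero_add, zero_add, Nat.descFactorial_self,
    Nat.descFactorial_self, Nat.factorial_succ, Nat.factorial_succ] at h
  have hk : (k.factorial : ℝ) ≠ 0 := by positivity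
  simp only [nsmul_eq_mul] at h
  push_cast at h
  apply mul_left_cancel₀ hk
  linear_combination h

open Polynomial in
lemma aux_even (n j : ℕ) : (Chebyshev.T ℝ ((2 * n + 1 : ℕ) : ℤ)).coeff (2 * j) = 0 := by
  induction j with
  | zero =>
    rw [mul_zero, coeff_zero_eq_eval_zero]
    exact Chebyshev.T_eval_zero_of_odd ℝ ⟨n, by push_cast; ring⟩
  | succ j ih =>
    have h := aux_rec (2 * n + 1) (2 * j)
    rw [ih, mul_zero] at h
    have h2 : (((2 * j : ℕ) : ℝ) + 2) * (((2 * j : ℕ) : ℝ) + 1) ≠ 0 := by positivity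
    exact (mul_eq_zero.mp h).resolve_right h2

open Polynomial in
lemma aux_one (n : ℕ) : (Chebyshev.T ℝ ((2 * n + 1 : ℕ) : ℤ)).coeff 1 ≠ 0 := by
  have h : (derivative (Chebyshev.T ℝ ((2 * n + 1 : ℕ) : ℤ))).coeff 0 ≠ 0 := by
    rw [Chebyshev.T_derivative_eq_U, coeff_zero_eq_eval_zero, eval_mul]
    have : (((2 * n + 1 : ℕ) : ℤ) - 1) = 2 * (n : ℤ) := by push_cast; ring
    rw [this, Chebyshev.U_eval_two_mul_zero]
    have h3 : (((2 * n + 1 : ℕ) : ℤ) : ℝ) ≠ 0 := by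
      simp only [Int.cast_natCast]
      positivity
    refine mul_ne_zero ?_ ?_
    · rw [eval_intCast]; exact h3
    · rcases Int.even_or_odd (n : ℤ) with h | h
      · simp [Int.negOnePow_even _ h]
      · simp [Int.negOnePow_odd _ h]
  rw [coeff_derivative] at h
  simpa using h

open Polynomial in
lemma aux_eval (n : ℕ) (s : ℝ) : (Chebyshev.T ℝ ((2 * n + 1 : ℕ) : ℤ)).eval s =
    ∑ j ∈ Finset.range (n + 1), (Chebyshev.T ℝ ((2 * n + 1 : ℕ) : ℤ)).coeff (2 * j + 1) *
      s ^ (2 * j + 1) := by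
  have hs : ∀ (f : ℕ → ℝ) (m : ℕ), ∑ i ∈ Finset.range (2 * m), f i =
      ∑ j ∈ Finset.range m, (f (2 * j) + f (2 * j + 1)) := by
    intro f m
    induction m with
    | zero => simp
    | succ m ih =>
      rw [Finset.sum_range_succ, ← ih, mul_add, mul_one, Finset.sum_range_succ,
        Finset.sum_range_succ, add_assoc]
  rw [eval_eq_sum_range' (n := 2 * (n + 1)), hs]
  · refine Finset.sum_congr rfl fun j _ => ?_
    rw [aux_even]; ring
  · rw [Chebyshev.natDegree_T]; simp; omega

open Polynomial in
lemma aux_zero (n : ℕ) (k : ℕ) :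
    (Chebyshev.T ℝ ((2 * n + 1 : ℕ) : ℤ)).eval (Real.sin (π * k / (2 * n + 1 : ℕ))) = 0 := by
  have h0 : ((2 * n + 1 : ℕ) : ℝ) ≠ 0 := by positivity
  rw [← Real.cos_pi_div_two_sub, Chebyshev.T_real_cos]
  have : (((2 * n + 1 : ℕ) : ℤ) : ℝ) * (π / 2 - π * k / (2 * n + 1 : ℕ)) =
      (2 * ((n : ℤ) - k : ℤ) + 1) * π / 2 := by
    rw [Int.cast_natCast, mul_sub, mul_div_cancel₀ _ h0]
    push_cast; ring
  rw [this, Real.cos_eq_zero_iff]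
  exact ⟨_, rfl⟩

noncomputable def auxY (n : ℕ) (i : Fin n) : ℝ :=
  1 / Real.sin (π * ((i : ℕ) + 1 : ℕ) / (2 * n + 1 : ℕ)) ^ 2

lemma aux_arg (n : ℕ) (i : Fin n) : 0 < π * ((i : ℕ) + 1 : ℕ) / (2 * n + 1 : ℕ) ∧
    π * ((i : ℕ) + 1 : ℕ) / (2 * n + 1 : ℕ) < π / 2 := by
  have := pi_pos
  refine ⟨by positivity, ?_⟩
  rw [div_lt_div_iff₀ (by positivity) (by norm_num), mul_assoc]
  apply mul_lt_mul_of_pos_left _ this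
  have := i.2
  exact_mod_cast (by omega : (i.1 + 1) * 2 < 2 * n + 1)

lemma aux_sin_pos (n : ℕ) (i : Fin n) :
    0 < Real.sin (π * ((i : ℕ) + 1 : ℕ) / (2 * n + 1 : ℕ)) :=
  Real.sin_pos_of_pos_of_lt_pi (aux_arg n i).1 (by linarith [(aux_arg n i).2, pi_pos])

lemma aux_inj (n : ℕ) : Function.Injective (auxY n) := by
  intro i j h
  unfold auxY at h
  have hi := aux_sin_pos n i
  have hj := aux_sin_pos n j
  rw [one_div, one_div, inv_inj] at h
  have h2 := (pow_left_inj₀ hi.le hj.le two_ne_zero).mp h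
  have h3 := Real.injOn_sin ⟨by linarith [(aux_arg n i).1, pi_pos], (aux_arg n i).2.le⟩
    ⟨by linarith [(aux_arg n j).1, pi_pos], (aux_arg n j).2.le⟩ h2
  have h0 : ((2 * n + 1 : ℕ) : ℝ) ≠ 0 := by positivity
  rw [div_left_inj' h0, mul_right_inj' pi_ne_zero] at h3
  have := Nat.cast_injective h3
  ext; omega

open Polynomial in
noncomputable def auxH (n : ℕ) : ℝ[X] :=
  ∑ j ∈ Finset.range (n + 1), C ((Chebyshev.T ℝ ((2 * n + 1 : ℕ) : ℤ)).coeff (2 * j + 1)) * X ^ (n - j)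

lemma auxH_coeff (n j : ℕ) (hj : j ≤ n) : (auxH n).coeff (n - j) =
    (Polynomial.Chebyshev.T ℝ ((2 * n + 1 : ℕ) : ℤ)).coeff (2 * j + 1) := by
  unfold auxH
  simp only [Polynomial.finsetSum_coeff, Polynomial.coeff_C_mul, Polynomial.coeff_X_pow]
  rw [Finset.sum_eq_single j]
  · simp
  · intro b hb hne
    have := Finset.mem_range.mp hb
    rw [if_neg (by omega), mul_zero]
  · intro h
    exact absurd (Finset.mem_range.mpr (by omega)) h

lemma auxH_natDegree (n : ℕ) : (auxH n).natDegree = n := by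
  apply Polynomial.natDegree_eq_of_le_of_coeff_ne_zero
  · unfold auxH
    apply Polynomial.natDegree_sum_le_of_forall_le
    intro j _
    exact (Polynomial.natDegree_C_mul_X_pow_le _ _).trans (by omega)
  · have := auxH_coeff n 0 (by omega)
    simp only [Nat.sub_zero] at this
    rw [this]
    exact aux_one n

lemma auxH_root (n : ℕ) (i : Fin n) : (auxH n).eval (auxY n i) = 0 := by
  have hz := aux_zero n (i + 1)
  rw [aux_eval] at hz
  have hs := (aux_sin_pos n i).ne'
  unfold auxH auxY
  set s := Real.sin (π * ((i : ℕ) + 1 : ℕ) / (2 * n + 1 : ℕ)) with hsd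
  rw [Polynomial.eval_finsetSum]
  have : s ^ (2 * n + 1) ≠ 0 := pow_ne_zero _ hs
  apply mul_left_cancel₀ this
  rw [mul_zero, ← hz, Finset.mul_sum]
  refine Finset.sum_congr rfl fun j hj => ?_
  have hj := Finset.mem_range.mp hj
  obtain ⟨m, rfl⟩ : ∃ m, n = j + m := ⟨n - j, by omega⟩
  simp only [Polynomial.eval_mul, Polynomial.eval_C, Polynomial.eval_pow, Polynomial.eval_X,
    Nat.add_sub_cancel_left]
  have : s ^ (2 * (j + m) + 1) = s ^ (2 * j + 1) * (s ^ 2) ^ m := by ring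
  rw [this, one_div, inv_pow]
  field_simp

lemma auxH_roots (n : ℕ) : (auxH n).roots = Finset.univ.val.map (auxY n) := by
  have h := Polynomial.roots_eq_of_natDegree_le_card_of_ne_zero (p := auxH n)
    (S := Finset.univ.map ⟨auxY n, aux_inj n⟩) ?_ ?_ ?_
  · rw [h]; rfl
  · intro x hx
    obtain ⟨i, _, rfl⟩ := Finset.mem_map.mp hx
    exact auxH_root n i
  · simp [auxH_natDegree]
  · intro h
    have := auxH_coeff n 0 (by omega)
    rw [h] at this
    exact aux_one n (by simpa using this.symm)

noncomputable def auxE (n k : ℕ) : ℝ := (Finset.univ.val.map (auxY n)).esymm k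

lemma auxE_coeff (n j : ℕ) (hj : j ≤ n) :
    (Polynomial.Chebyshev.T ℝ ((2 * n + 1 : ℕ) : ℤ)).coeff (2 * j + 1) =
    (Polynomial.Chebyshev.T ℝ ((2 * n + 1 : ℕ) : ℤ)).coeff 1 * (-1) ^ j * auxE n j := by
  have h := Polynomial.coeff_eq_esymm_roots_of_card (p := auxH n) (k := n - j)
    (by rw [auxH_roots, auxH_natDegree]; simp) (by rw [auxH_natDegree]; omega)
  rw [auxH_coeff n j hj, auxH_natDegree, auxH_roots, Nat.sub_sub_self hj] at h
  have h0 := auxH_coeff n 0 (by omega)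
  rw [Polynomial.leadingCoeff, auxH_natDegree] at h
  simp only [Nat.sub_zero, mul_zero, zero_add] at h0
  rw [h, h0]; rfl

lemma auxE_zero (n : ℕ) : auxE n 0 = 1 := by
  simp [auxE, Multiset.esymm]

lemma auxE_succ (n j : ℕ) (hj : j + 1 ≤ n) :
    auxE n (j + 1) = auxE n j * (((2 * n + 1 : ℕ) : ℝ) ^ 2 - (2 * j + 1) ^ 2) /
      ((2 * j + 3) * (2 * j + 2)) := by
  have h := aux_rec (2 * n + 1) (2 * j + 1)
  rw [show 2 * j + 1 + 2 = 2 * (j + 1) + 1 by ring, auxE_coeff n _ hj,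
    auxE_coeff n j (by omega)] at h
  have h1 := mul_ne_zero (aux_one n) (pow_ne_zero j (by norm_num : (-1 : ℝ) ≠ 0))
  rw [eq_div_iff (by positivity)]
  apply mul_left_cancel₀ h1
  push_cast at h ⊢
  rw [pow_succ] at h
  linear_combination -h

noncomputable def auxP (n k : ℕ) : ℝ := ∑ i, auxY n i ^ k

lemma aux_newton (n k : ℕ) : k * auxE n k = (-1) ^ (k + 1) *
    ∑ a ∈ Finset.HasAntidiagonal.antidiagonal k with a.1 < k, (-1) ^ a.1 * auxE n a.1 * auxP n a.2 := by
  have h := congrArg (MvPolynomial.aeval (auxY n)) (MvPolynomial.mul_esymm_eq_sum (Fin n) ℝ k)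
  simp only [map_mul, map_sum, map_pow, map_neg, map_one, map_natCast, MvPolynomial.psum,
    MvPolynomial.aeval_esymm_eq_multiset_esymm, MvPolynomial.aeval_X] at h
  exact h

lemma aux_newton' (n k : ℕ) : (k + 1) * auxE n (k + 1) = (-1) ^ k *
    ∑ a ∈ Finset.range (k + 1), (-1) ^ a * auxE n a * auxP n (k + 1 - a) := by
  have h := aux_newton n (k + 1)
  rw [Finset.sum_filter, Finset.Nat.sum_antidiagonal_eq_sum_range_succ_mk,
    Finset.sum_range_succ] at h
  simp only [lt_irrefl, if_false, add_zero] at h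
  rw [Finset.sum_congr rfl (fun a ha => if_pos (Finset.mem_range.mp ha))] at h
  push_cast at h
  rw [h]; ring

lemma aux_sum (n : ℕ) :
    ∑ θ ∈ Finset.Icc 1 (2 * n + 1 - 1), 1 / Real.sin (π * θ / (2 * n + 1 : ℕ)) ^ 18 =
      2 * auxP n 9 := by
  have h0 : ((2 * n + 1 : ℕ) : ℝ) ≠ 0 := by positivity
  have e1 : ∑ θ ∈ Finset.Icc 1 (2 * n + 1 - 1), 1 / Real.sin (π * θ / (2 * n + 1 : ℕ)) ^ 18 =
      ∑ k ∈ Finset.range (n + n), 1 / Real.sin (π * (k + 1 : ℕ) / (2 * n + 1 : ℕ)) ^ 18 := by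
    rw [Finset.range_eq_Ico, Finset.sum_Ico_add' (fun k : ℕ =>
      1 / Real.sin (π * k / (2 * n + 1 : ℕ)) ^ 18)]
    refine Finset.sum_congr ?_ fun _ _ => rfl
    ext; simp; omega
  have e2 : auxP n 9 =
      ∑ k ∈ Finset.range n, 1 / Real.sin (π * (k + 1 : ℕ) / (2 * n + 1 : ℕ)) ^ 18 := by
    rw [← Fin.sum_univ_eq_sum_range (fun k =>
      1 / Real.sin (π * (k + 1 : ℕ) / (2 * n + 1 : ℕ)) ^ 18)]
    unfold auxP auxY
    refine Finset.sum_congr rfl fun i _ => ?_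
    rw [div_pow, one_pow, ← pow_mul]
  rw [e1, Finset.sum_range_add, ← e2]
  have e3 : ∑ k ∈ Finset.range n, 1 / Real.sin (π * (n + k + 1 : ℕ) / (2 * n + 1 : ℕ)) ^ 18 =
      auxP n 9 := by
    rw [e2, ← Finset.sum_range_reflect]
    refine Finset.sum_congr rfl fun k hk => ?_
    have hk := Finset.mem_range.mp hk
    rw [← Real.sin_pi_sub]
    congr 3
    have : ((n + (n - 1 - k) + 1 : ℕ) : ℝ) = ((2 * n + 1 : ℕ) : ℝ) - (k + 1 : ℕ) := by
      rw [eq_sub_iff_add_eq]; norm_cast; omega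
    rw [this]
    field_simp
    ring
  rw [e3]; ring

lemma aux_alg (q : ℝ) (e P : ℕ → ℝ) (e0 : e 0 = 1)
    (hE : ∀ j : ℕ, j < 9 → e (j + 1) = e j * (q - (2 * j + 1) ^ 2) / ((2 * j + 3) * (2 * j + 2)))
    (hP : ∀ k : ℕ, (k + 1) * e (k + 1) = (-1) ^ k *
      ∑ a ∈ Finset.range (k + 1), (-1) ^ a * e a * P (k + 1 - a)) :
    P 9 = (-23133945892303 / 389792954801250) * q ^ 0 + (16384 / 328185) * q ^ 1 + (8114816 / 1064188125) * q ^ 2 + (59827472 / 40226311125) * q ^ 3 + (9358 / 35083125) * q ^ 4 + (2021 / 49116375) * q ^ 5 + (1046174 / 201131555625) * q ^ 6 + (46 / 91216125) * q ^ 7 + (3617 / 108547188750) * q ^ 8 + (43867 / 38979295480125) * q ^ 9 := by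
  have e1 : e 1 = (-1 / 6) * q ^ 0 + (1 / 6) * q ^ 1 := by
    have h := hE 0 (by norm_num)
    rw [e0] at h
    norm_num at h
    linear_combination h
  have e2 : e 2 = (3 / 40) * q ^ 0 + (-1 / 12) * q ^ 1 + (1 / 120) * q ^ 2 := by
    have h := hE 1 (by norm_num)
    rw [e1] at h
    norm_num at h
    linear_combination h
  have e3 : e 3 = (-5 / 112) * q ^ 0 + (37 / 720) * q ^ 1 + (-1 / 144) * q ^ 2 + (1 / 5040) * q ^ 3 := by
    have h := hE 2 (by norm_num)
    rw [e2] at h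
    norm_num at h
    linear_combination h
  have e4 : e 4 = (35 / 1152) * q ^ 0 + (-3229 / 90720) * q ^ 1 + (47 / 8640) * q ^ 2 + (-1 / 4320) * q ^ 3 + (1 / 362880) * q ^ 4 := by
    have h := hE 3 (by norm_num)
    rw [e3] at h
    norm_num at h
    linear_combination h
  have e5 : e 5 = (-63 / 2816) * q ^ 0 + (10679 / 403200) * q ^ 1 + (-1571 / 362880) * q ^ 2 + (19 / 86400) * q ^ 3 + (-1 / 241920) * q ^ 4 + (1 / 39916800) * q ^ 5 := by
    have h := hE 4 (by norm_num)
    rw [e4] at h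
    norm_num at h
    linear_combination h
  have e6 : e 6 = (231 / 13312) * q ^ 0 + (-550499 / 26611200) * q ^ 1 + (153617 / 43545600) * q ^ 2 + (-2159 / 10886400) * q ^ 3 + (67 / 14515200) * q ^ 4 + (-1 / 21772800) * q ^ 5 + (1 / 6227020800) * q ^ 6 := by
    have h := hE 5 (by norm_num)
    rw [e5] at h
    norm_num at h
    linear_combination h
  have e7 : e 7 = (-143 / 10240) * q ^ 0 + (2430898831 / 145297152000) * q ^ 1 + (-1206053 / 410572800) * q ^ 2 + (230443 / 1306368000) * q ^ 3 + (-8521 / 1828915200) * q ^ 4 + (11 / 186624000) * q ^ 5 + (-1 / 2874009600) * q ^ 6 + (1 / 1307674368000) * q ^ 7 := by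
    have h := hE 6 (by norm_num)
    rw [e6] at h
    norm_num at h
    linear_combination h
  have e8 : e 8 = (6435 / 557056) * q ^ 0 + (-3588113 / 258306048) * q ^ 1 + (1447983367 / 581188608000) * q ^ 2 + (-900821 / 5748019200) * q ^ 3 + (329389 / 73156608000) * q ^ 4 + (-241 / 3657830400) * q ^ 5 + (29 / 57480192000) * q ^ 6 + (-1 / 523069747200) * q ^ 7 + (1 / 355687428096000) * q ^ 8 := by
    have h := hE 7 (by norm_num)
    rw [e7] at h
    norm_num at h
    linear_combination h
  have e9 : e 9 = (-12155 / 1245184) * q ^ 0 + (7443842303 / 632333205504) * q ^ 1 + (-22449497227 / 10461394944000) * q ^ 2 + (13154671847 / 94152554496000) * q ^ 3 + (-20583203 / 4828336128000) * q ^ 4 + (30217 / 438939648000) * q ^ 5 + (-4483 / 7242504192000) * q ^ 6 + (97 / 31384184832000) * q ^ 7 + (-1 / 125536739328000) * q ^ 8 + (1 / 121645100408832000) * q ^ 9 := by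
    have h := hE 8 (by norm_num)
    rw [e8] at h
    norm_num at h
    linear_combination h
  have p1 : P 1 = (-1 / 6) * q ^ 0 + (1 / 6) * q ^ 1 := by
    have h := hP 0
    simp only [Finset.sum_range_succ, Finset.sum_range_zero] at h
    norm_num at h
    rw [e0, e1] at h
    linear_combination -h
  have p2 : P 2 = (-11 / 90) * q ^ 0 + (1 / 9) * q ^ 1 + (1 / 90) * q ^ 2 := by
    have h := hP 1
    simp only [Finset.sum_range_succ, Finset.sum_range_zero] at h
    norm_num at h
    rw [e0, e1, e2, p1] at h
    linear_combination h
  have p3 : P 3 = (-191 / 1890) * q ^ 0 + (4 / 45) * q ^ 1 + (1 / 90) * q ^ 2 + (1 / 945) * q ^ 3 := by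
    have h := hP 2
    simp only [Finset.sum_range_succ, Finset.sum_range_zero] at h
    norm_num at h
    rw [e0, e1, e2, e3, p1, p2] at h
    linear_combination -h
  have p4 : P 4 = (-2497 / 28350) * q ^ 0 + (8 / 105) * q ^ 1 + (7 / 675) * q ^ 2 + (4 / 2835) * q ^ 3 + (1 / 9450) * q ^ 4 := by
    have h := hP 3
    simp only [Finset.sum_range_succ, Finset.sum_range_zero] at h
    norm_num at h
    rw [e0, e1, e2, e3, e4, p1, p2, p3] at h
    linear_combination h
  have p5 : P 5 = (-14797 / 187110) * q ^ 0 + (64 / 945) * q ^ 1 + (82 / 8505) * q ^ 2 + (13 / 8505) * q ^ 3 + (1 / 5670) * q ^ 4 + (1 / 93555) * q ^ 5 := by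
    have h := hP 4
    simp only [Finset.sum_range_succ, Finset.sum_range_zero] at h
    norm_num at h
    rw [e0, e1, e2, e3, e4, e5, p1, p2, p3, p4] at h
    linear_combination -h
  have p6 : P 6 = (-92427157 / 1277025750) * q ^ 0 + (128 / 2079) * q ^ 1 + (1916 / 212625) * q ^ 2 + (278 / 178605) * q ^ 3 + (31 / 141750) * q ^ 4 + (2 / 93555) * q ^ 5 + (691 / 638512875) * q ^ 6 := by
    have h := hP 5
    simp only [Finset.sum_range_succ, Finset.sum_range_zero] at h
    norm_num at h
    rw [e0, e1, e2, e3, e4, e5, e6, p1, p2, p3, p4, p5] at h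
    linear_combination h
  have p7 : P 7 = (-36740617 / 547296750) * q ^ 0 + (512 / 9009) * q ^ 1 + (944 / 111375) * q ^ 2 + (592 / 382725) * q ^ 3 + (311 / 1275750) * q ^ 4 + (2 / 66825) * q ^ 5 + (691 / 273648375) * q ^ 6 + (2 / 18243225) * q ^ 7 := by
    have h := hP 6
    simp only [Finset.sum_range_succ, Finset.sum_range_zero] at h
    norm_num at h
    rw [e0, e1, e2, e3, e4, e5, e6, e7, p1, p2, p3, p4, p5, p6] at h
    linear_combination -h
  have p8 : P 8 = (-61430943169 / 976924698750) * q ^ 0 + (1024 / 19305) * q ^ 1 + (8533792 / 1064188125) * q ^ 2 + (134432 / 88409475) * q ^ 3 + (2473 / 9568125) * q ^ 4 + (1072 / 29469825) * q ^ 5 + (113324 / 28733079375) * q ^ 6 + (16 / 54729675) * q ^ 7 + (3617 / 325641566250) * q ^ 8 := by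
    have h := hP 7
    simp only [Finset.sum_range_succ, Finset.sum_range_zero] at h
    norm_num at h
    rw [e0, e1, e2, e3, e4, e5, e6, e7, e8, p1, p2, p3, p4, p5, p6, p7] at h
    linear_combination h
  have p9 : P 9 = (-23133945892303 / 389792954801250) * q ^ 0 + (16384 / 328185) * q ^ 1 + (8114816 / 1064188125) * q ^ 2 + (59827472 / 40226311125) * q ^ 3 + (9358 / 35083125) * q ^ 4 + (2021 / 49116375) * q ^ 5 + (1046174 / 201131555625) * q ^ 6 + (46 / 91216125) * q ^ 7 + (3617 / 108547188750) * q ^ 8 + (43867 / 38979295480125) * q ^ 9 := by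
    have h := hP 8
    simp only [Finset.sum_range_succ, Finset.sum_range_zero] at h
    norm_num at h
    rw [e0, e1, e2, e3, e4, e5, e6, e7, e8, e9, p1, p2, p3, p4, p5, p6, p7, p8] at h
    linear_combination -h
  exact p9



theorem stmt_15 (p : ℕ) (hp : p.Prime) (hodd : Odd p) (hp18 : 18 < p) :
    ((p : ℝ) ^ 9 / 2 ^ 19) * ∑ θ ∈ Finset.Icc 1 (p - 1), 1 / Real.sin (π * θ / p) ^ 18 =
      (1 / 524288) * (p : ℝ) ^ 9 * ((87734 / 38979295480125) * (p : ℝ) ^ 18 +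
        (3617 / 54273594375) * p ^ 16 + (92 / 91216125) * p ^ 14 +
        (2092348 / 201131555625) * p ^ 12 + (4042 / 49116375) * p ^ 10 +
        (18716 / 35083125) * p ^ 8 + (119654944 / 40226311125) * p ^ 6 +
        (16229632 / 1064188125) * p ^ 4 + (32768 / 328185) * p ^ 2 -
        23133945892303 / 194896477400625) := by
  obtain ⟨n, rfl⟩ := hodd
  have h := aux_alg (((2 * n + 1 : ℕ) : ℝ) ^ 2) (auxE n) (auxP n) (auxE_zero n)
    (fun j hj => auxE_succ n j (by omega)) (aux_newton' n)
  rw [aux_sum, h]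
  ring
end
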